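/- Let G be a c-closed graph on n vertices and v a vertex of G. Then the number of maximal cliques of G is at most the number of maximal cliques of G \ {v} plus n · 3^{(c-1)/3}. -/

import Mathlib

/-- A graph `G` is `c`-closed if whenever two distinct vertices have at least `c`
common neighbors, they are adjacent. -/
def CClosed {V : Type*} (c : ℕ) (G : SimpleGraph V) : Prop :=
  ∀ u w : V, u ≠ w → c ≤ (G.neighborSet u ∩ G.neighborSet w).ncard → G.Adj u w

/-- `K` is a maximal clique of `G`: a clique not properly contained in any other clique. -/
def IsMaxClique {V : Type*} (G : SimpleGraph V) (K : Set V) : Prop :=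
  G.IsClique K ∧ ∀ K' : Set V, G.IsClique K' → K ⊆ K' → K = K'

/-- `K` is a maximal clique of the subgraph of `G` induced by `S`: a clique of `G`
contained in `S` that is not properly contained in any other clique of `G`
contained in `S`.  (Cliques of `G[S]` are exactly cliques of `G` contained in `S`.) -/
def IsMaxCliqueIn {V : Type*} (G : SimpleGraph V) (S : Set V) (K : Set V) : Prop :=
  K ⊆ S ∧ G.IsClique K ∧ ∀ K' : Set V, K' ⊆ S → G.IsClique K' → K ⊆ K' → K = K'

theorem ncard_le_sum_of_cover {V ι : Type*} [Fintype V] (D : Finset ι) (A : ι → Set (Set V))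
    (B : Set (Set V)) (h : ∀ K ∈ B, ∃ i ∈ D, K ∈ A i) :
    B.ncard ≤ ∑ i ∈ D, (A i).ncard := by
  classical
  induction D using Finset.induction_on generalizing B with
  | empty =>
    have : B = ∅ := by
      ext K
      constructor
      · intro hK
        obtain ⟨i, hi, _⟩ := h K hK
        simp at hi
      · intro hK
        exact absurd hK (by simp)
    simp [this]
  | insert a s ha ih =>
    rw [Finset.sum_insert ha]
    have h1 : (B \ A a).ncard ≤ ∑ i ∈ s, (A i).ncard := by
      apply ih
      rintro K ⟨hK, hKa⟩
      obtain ⟨i, hi, hKi⟩ := h K hK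
      rcases Finset.mem_insert.1 hi with rfl | hi
      · exact absurd hKi hKa
      · exact ⟨i, hi, hKi⟩
    have h2 : B.ncard ≤ (A a ∪ B \ A a).ncard :=
      Set.ncard_le_ncard (by
        intro K hK
        by_cases hh : K ∈ A a
        · exact Or.inl hh
        · exact Or.inr ⟨hK, hh⟩) (Set.toFinite _)
    have h3 := Set.ncard_union_le (A a) (B \ A a)
    omega

theorem ncard_remove_le {V : Type*} [Fintype V] (y : V) (A B : Set (Set V))
    (h : ∀ K ∈ A, y ∈ K ∧ K \ {y} ∈ B) : A.ncard ≤ B.ncard := by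
  apply Set.ncard_le_ncard_of_injOn (fun K => K \ {y}) (fun K hK => (h K hK).2)
  · intro K hK L hL hKL
    have e1 := Set.insert_sdiff_self_of_mem (h K hK).1
    have e2 := Set.insert_sdiff_self_of_mem (h L hL).1
    simp only at hKL
    rw [← e1, hKL, e2]

/-- removing `y` from a maximal clique through `y` -/
theorem isMaxCliqueIn_diff {V : Type*} (G : SimpleGraph V) (S S' K : Set V) (y : V)
    (hS : S' ⊆ S) (hN : S' ⊆ G.neighborSet y) (hK : IsMaxCliqueIn G S K) (hy : y ∈ K)
    (hsub : K \ {y} ⊆ S') : IsMaxCliqueIn G S' (K \ {y}) := by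
  refine ⟨hsub, hK.2.1.subset Set.sdiff_subset, ?_⟩
  intro K' hK'S hK' hle
  have hyK' : y ∉ K' := fun hh => G.irrefl (hN (hK'S hh))
  have key := hK.2.2 (insert y K') (Set.insert_subset (hK.1 hy) (hK'S.trans hS))
    (hK'.insert (fun b hb _ => hN (hK'S hb)))
    (by
      intro z hz
      by_cases hzy : z = y
      · exact Or.inl hzy
      · exact Or.inr (hle ⟨hz, hzy⟩))
  rw [key]
  ext z
  simp only [Set.mem_sdiff, Set.mem_insert_iff, Set.mem_singleton_iff]
  constructor
  · rintro ⟨h1 | h1, h2⟩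
    · exact absurd h1 h2
    · exact h1
  · intro hz
    exact ⟨Or.inr hz, fun hh => hyK' (hh ▸ hz)⟩

theorem cube_le_three_pow (d : ℕ) : d ^ 3 ≤ 3 ^ d := by
  rcases Nat.lt_or_ge d 3 with h | h
  · interval_cases d <;> norm_num
  · induction d, h using Nat.le_induction with
    | base => norm_num
    | succ k hk ih =>
      rw [pow_succ 3 k]
      have : (k + 1) ^ 3 ≤ k ^ 3 * 3 := by
        obtain ⟨j, rfl⟩ := Nat.exists_eq_add_of_le hk
        ring_nf
        nlinarith [Nat.zero_le (j ^ 3), Nat.zero_le (j ^ 2)]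
      omega

theorem le_rpow_third (d : ℕ) : (d : ℝ) ≤ (3 : ℝ) ^ ((d : ℝ) / 3) := by
  have h : (d : ℝ) ^ 3 ≤ (3 : ℝ) ^ d := by exact_mod_cast cube_le_three_pow d
  have h2 : ((3 : ℝ) ^ ((d : ℝ) / 3)) ^ 3 = 3 ^ d := by
    rw [← Real.rpow_natCast, ← Real.rpow_mul (by norm_num), ← Real.rpow_natCast]
    congr 1
    push_cast
    ring
  rw [← h2] at h
  exact le_of_pow_le_pow_left₀ (by norm_num) (by positivity) h

/-- Moon–Moser bound. -/
theorem moon_moser {V : Type*} [Fintype V] (G : SimpleGraph V) (m : ℕ) :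
    ∀ S : Set V, S.ncard ≤ m →
      ({K : Set V | IsMaxCliqueIn G S K}.ncard : ℝ) ≤ 3 ^ ((m : ℝ) / 3) := by
  classical
  induction m using Nat.strong_induction_on with
  | _ m ih =>
  intro S hS
  rcases S.eq_empty_or_nonempty with rfl | hne
  · have h1 : {K : Set V | IsMaxCliqueIn G ∅ K}.ncard ≤ 1 := by
      rw [Set.ncard_le_one (Set.toFinite _)]
      intro a ha b hb
      rw [Set.subset_empty_iff.1 ha.1, Set.subset_empty_iff.1 hb.1]
    calc ({K : Set V | IsMaxCliqueIn G ∅ K}.ncard : ℝ) ≤ 1 := by exact_mod_cast h1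
      _ ≤ _ := Real.one_le_rpow (by norm_num) (by positivity)
  · obtain ⟨x, hxS, hx⟩ := Set.exists_max_image S (fun y => (S ∩ G.neighborSet y).ncard)
      (Set.toFinite _) hne
    let D : Finset V := (S \ G.neighborSet x).toFinite.toFinset
    have hDmem : ∀ y, y ∈ D ↔ y ∈ S ∧ ¬ G.Adj x y := by
      intro y
      simp [D]
    have hDcard : D.card + (S ∩ G.neighborSet x).ncard = S.ncard := by
      have := Set.ncard_inter_add_ncard_sdiff_eq_ncard S (G.neighborSet x) (Set.toFinite _)
      have h2 : D.card = (S \ G.neighborSet x).ncard :=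
        (Set.ncard_eq_toFinset_card _ _).symm
      omega
    have hDpos : 0 < D.card := Finset.card_pos.2 ⟨x, (hDmem x).2 ⟨hxS, G.irrefl⟩⟩
    have hcov := ncard_le_sum_of_cover D
      (fun y => {K : Set V | IsMaxCliqueIn G S K ∧ y ∈ K}) {K : Set V | IsMaxCliqueIn G S K}
      (by
        intro K hK
        by_contra hcon
        have hall : ∀ z ∈ K, G.Adj x z := by
          intro z hz
          by_contra hxz
          exact hcon ⟨z, (hDmem z).2 ⟨hK.1 hz, hxz⟩, hK, hz⟩
        have := hK.2.2 (insert x K) (Set.insert_subset hxS hK.1)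
          (hK.2.1.insert (fun b hb _ => hall b hb)) (Set.subset_insert _ _)
        have hxK : x ∈ K := by
          rw [this]
          exact Set.mem_insert _ _
        exact G.irrefl (hall x hxK))
    have hterm : ∀ y ∈ D, (({K : Set V | IsMaxCliqueIn G S K ∧ y ∈ K}.ncard : ℕ) : ℝ) ≤
        3 ^ (((m - D.card : ℕ) : ℝ) / 3) := by
      intro y hy
      have h1 : {K : Set V | IsMaxCliqueIn G S K ∧ y ∈ K}.ncard ≤
          {K : Set V | IsMaxCliqueIn G (S ∩ G.neighborSet y) K}.ncard := by
        apply ncard_remove_le y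
        rintro K ⟨hK, hyK⟩
        refine ⟨hyK, isMaxCliqueIn_diff G S _ K y Set.inter_subset_left Set.inter_subset_right
          hK hyK ?_⟩
        rintro z ⟨hz, hzy⟩
        exact ⟨hK.1 hz, hK.2.1 hyK hz (fun hh => hzy hh.symm)⟩
      have h2 := ih (m - D.card) (by omega) (S ∩ G.neighborSet y) (by
        have := hx y ((hDmem y).1 hy).1
        omega)
      exact le_trans (by exact_mod_cast h1) h2
    calc ({K : Set V | IsMaxCliqueIn G S K}.ncard : ℝ)
        ≤ ∑ y ∈ D, (({K : Set V | IsMaxCliqueIn G S K ∧ y ∈ K}.ncard : ℕ) : ℝ) := by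
          exact_mod_cast hcov
      _ ≤ ∑ y ∈ D, (3 : ℝ) ^ (((m - D.card : ℕ) : ℝ) / 3) := Finset.sum_le_sum hterm
      _ = D.card * (3 : ℝ) ^ (((m - D.card : ℕ) : ℝ) / 3) := by
          rw [Finset.sum_const, nsmul_eq_mul]
      _ ≤ (3 : ℝ) ^ ((D.card : ℝ) / 3) * (3 : ℝ) ^ (((m - D.card : ℕ) : ℝ) / 3) := by
          gcongr
          exact le_rpow_third _
      _ = 3 ^ ((m : ℝ) / 3) := by
          rw [← Real.rpow_add (by norm_num), Nat.cast_sub (by omega)]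
          congr 1
          ring

/-- In a `c`-closed graph on `n` vertices, the number of maximal cliques of `G`
is at most the number of maximal cliques of `G \ {v}` plus `n * 3 ^ ((c - 1)/3)`. -/
theorem card_maxCliques_le_del_add {V : Type*} [Fintype V] {c n : ℕ} (hc : 0 < c)
    (G : SimpleGraph V) (hcard : Fintype.card V = n) (hG : CClosed c G) (v : V) :
    ({K : Set V | IsMaxClique G K}.ncard : ℝ) ≤
      ({K : Set V | IsMaxCliqueIn G {u : V | u ≠ v} K}.ncard : ℝ) +
        (n : ℝ) * 3 ^ (((c : ℝ) - 1) / 3) := by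
  classical
  subst hcard
  set S : Set V := {u : V | u ≠ v} with hSdef
  have hmaxuniv : ∀ K, IsMaxClique G K → IsMaxCliqueIn G Set.univ K :=
    fun K hK => ⟨Set.subset_univ _, hK.1, fun K' _ h1 h2 => hK.2 K' h1 h2⟩
  let B : Set (Set V) := {K | IsMaxClique G K ∧ v ∈ K ∧ ¬ IsMaxCliqueIn G S (K \ {v})}
  let A : Set (Set V) := {K | IsMaxClique G K} \ B
  have hA : A.ncard ≤ {K : Set V | IsMaxCliqueIn G S K}.ncard := by
    have hAmem : ∀ K ∈ A, IsMaxClique G K ∧ (v ∈ K → IsMaxCliqueIn G S (K \ {v})) := by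
      rintro K ⟨hK, hKB⟩
      refine ⟨hK, fun hv => ?_⟩
      by_contra hh
      exact hKB ⟨hK, hv, hh⟩
    apply Set.ncard_le_ncard_of_injOn (fun K => K \ {v})
    · intro K hK
      obtain ⟨hm, hv⟩ := hAmem K hK
      by_cases hvK : v ∈ K
      · exact hv hvK
      · have e : K \ {v} = K := Set.sdiff_singleton_eq_self hvK
        simp only [e]
        exact ⟨fun z hz hzv => hvK (hzv ▸ hz), hm.1, fun K' _ h1 h2 => hm.2 K' h1 h2⟩
    · intro K hK L hL hKL
      simp only at hKL
      have hKm := (hAmem K hK).1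
      have hLm := (hAmem L hL).1
      by_cases hvK : v ∈ K
      · by_cases hvL : v ∈ L
        · rw [← Set.insert_sdiff_self_of_mem hvK, hKL, Set.insert_sdiff_self_of_mem hvL]
        · rw [Set.sdiff_singleton_eq_self hvL] at hKL
          exact (hLm.2 K hKm.1 (hKL ▸ Set.sdiff_subset)).symm
      · rw [Set.sdiff_singleton_eq_self hvK] at hKL
        exact hKm.2 L hLm.1 (hKL ▸ Set.sdiff_subset)
  have hcov := ncard_le_sum_of_cover (Finset.univ : Finset V)
    (fun u => {K : Set V | IsMaxClique G K ∧ v ∈ K ∧ u ≠ v ∧ ¬ G.Adj u v ∧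
      K \ {v} ⊆ G.neighborSet u ∩ G.neighborSet v}) B (by
      rintro K ⟨hK, hvK, hnot⟩
      have hKS : K \ {v} ⊆ S := fun z hz => hz.2
      have hcl : G.IsClique (K \ {v}) := hK.1.subset Set.sdiff_subset
      have hex : ∃ K' : Set V, K' ⊆ S ∧ G.IsClique K' ∧ K \ {v} ⊆ K' ∧ K \ {v} ≠ K' := by
        by_contra hcon
        refine hnot ⟨hKS, hcl, fun K' h1 h2 h3 => ?_⟩
        by_contra h4
        exact hcon ⟨K', h1, h2, h3, h4⟩
      obtain ⟨K', h1, h2, h3, h4⟩ := hex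
      obtain ⟨u, huK', huK⟩ := Set.exists_of_ssubset (h3.ssubset_of_ne h4)
      have huv : u ≠ v := h1 huK'
      have huK2 : u ∉ K := fun hh => huK ⟨hh, huv⟩
      have hadj : ∀ z ∈ K \ {v}, G.Adj u z := fun z hz =>
        h2 huK' (h3 hz) (fun hh => huK (hh ▸ hz))
      refine ⟨u, Finset.mem_univ _, hK, hvK, huv, ?_, ?_⟩
      · intro huvadj
        apply huK2
        rw [hK.2 (insert u K) (hK.1.insert (fun b hb _ => by
          by_cases hbv : b = v
          · rw [hbv]
            exact huvadj
          · exact hadj b ⟨hb, hbv⟩)) (Set.subset_insert _ _)]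
        exact Set.mem_insert _ _
      · intro z hz
        exact ⟨hadj z hz, hK.1 hvK hz.1 (fun hh => hz.2 hh.symm)⟩)
  have hterm : ∀ u ∈ (Finset.univ : Finset V),
      (({K : Set V | IsMaxClique G K ∧ v ∈ K ∧ u ≠ v ∧ ¬ G.Adj u v ∧
        K \ {v} ⊆ G.neighborSet u ∩ G.neighborSet v}.ncard : ℕ) : ℝ) ≤
        3 ^ (((c : ℝ) - 1) / 3) := by
    intro u _
    by_cases hu : u ≠ v ∧ ¬ G.Adj u v
    · have hlt : (G.neighborSet u ∩ G.neighborSet v).ncard ≤ c - 1 := by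
        by_contra hh
        exact hu.2 (hG u v hu.1 (by omega))
      have h1 := moon_moser G (c - 1) _ hlt
      rw [Nat.cast_sub hc, Nat.cast_one] at h1
      refine le_trans ?_ h1
      have h2 := ncard_remove_le v
        {K : Set V | IsMaxClique G K ∧ v ∈ K ∧ u ≠ v ∧ ¬ G.Adj u v ∧
          K \ {v} ⊆ G.neighborSet u ∩ G.neighborSet v}
        {K : Set V | IsMaxCliqueIn G (G.neighborSet u ∩ G.neighborSet v) K} (by
          rintro K ⟨hK, hvK, _, _, hsub⟩
          exact ⟨hvK, isMaxCliqueIn_diff G Set.univ _ K v (Set.subset_univ _)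
            Set.inter_subset_right (hmaxuniv K hK) hvK hsub⟩)
      exact_mod_cast h2
    · have e : {K : Set V | IsMaxClique G K ∧ v ∈ K ∧ u ≠ v ∧ ¬ G.Adj u v ∧
          K \ {v} ⊆ G.neighborSet u ∩ G.neighborSet v} = ∅ := by
        apply Set.eq_empty_of_forall_notMem
        rintro K ⟨_, _, h1, h2, _⟩
        exact hu ⟨h1, h2⟩
      rw [e, Set.ncard_empty, Nat.cast_zero]
      positivity
  have hB : (B.ncard : ℝ) ≤ (Fintype.card V : ℝ) * 3 ^ (((c : ℝ) - 1) / 3) := by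
    refine le_trans (by exact_mod_cast hcov) (le_trans (Finset.sum_le_sum hterm) ?_)
    rw [Finset.sum_const, nsmul_eq_mul, Finset.card_univ]
  have hsplit : {K : Set V | IsMaxClique G K}.ncard ≤ A.ncard + B.ncard := by
    refine le_trans (Set.ncard_le_ncard ?_ (Set.toFinite _)) (Set.ncard_union_le A B)
    intro K hK
    by_cases hh : K ∈ B
    · exact Or.inr hh
    · exact Or.inl ⟨hK, hh⟩
  have hsplit' : ({K : Set V | IsMaxClique G K}.ncard : ℝ) ≤ A.ncard + B.ncard := by
    exact_mod_cast hsplit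
  have hA' : (A.ncard : ℝ) ≤ {K : Set V | IsMaxCliqueIn G S K}.ncard := by
    exact_mod_cast hA
  linarith
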